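/- arXiv:2206.03176 — 14 statements merged into one kernel-verified Lean document; each statement's English description precedes it below -/
import Mathlib

section
/- Let (X,r) be a non-degenerate involutive set-theoretic solution of the Yang–Baxter equation with structure group G(X,r), let φ : G(X,r) → Sym(X) be the homomorphism with φ(x) = σ_x, and let ℤ^X be the free abelian group with basis {t_x : x ∈ X}, on which G(X,r) acts by g • t_x = t_{φ(g)(x)}. Then there exists a bijective map π : G(X,r) → ℤ^X such that π(x) = t_x for every x ∈ X and π(gh) = π(g) + g • π(h) for all g,h ∈ G(X,r) (i.e., π is a bijective 1-cocycle). -/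
open scoped BigOperators

section YB

variable {X : Type*}

/-- `r¹² = r × id` acting on the first two components of `X³`. -/
def r12 (r : X × X → X × X) : X × X × X → X × X × X :=
  fun p => ((r (p.1, p.2.1)).1, (r (p.1, p.2.1)).2, p.2.2)

/-- `r²³ = id × r` acting on the last two components of `X³`. -/
def r23 (r : X × X → X × X) : X × X × X → X × X × X :=
  fun p => (p.1, r (p.2.1, p.2.2))

/-- A set-theoretic solution of the Yang–Baxter equation: a bijection
`r : X × X → X × X` satisfying the braid relation `r¹² r²³ r¹² = r²³ r¹² r²³`. -/
structure YBSol (X : Type*) where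
  r : X × X → X × X
  bij : Function.Bijective r
  braid : r12 r ∘ r23 r ∘ r12 r = r23 r ∘ r12 r ∘ r23 r

namespace YBSol

variable (S : YBSol X)

/-- `σ_x(y)`, the first component of `r(x,y)`. -/
def σ (x y : X) : X := (S.r (x, y)).1

/-- `γ_y(x)`, the second component of `r(x,y)`. -/
def γ (y x : X) : X := (S.r (x, y)).2

/-- Non-degeneracy: all the maps `σ_x` and `γ_y` are bijections of `X`. -/
def NonDeg : Prop :=
  (∀ x, Function.Bijective (S.σ x)) ∧ (∀ y, Function.Bijective (S.γ y))

/-- Involutivity: `r ∘ r = id`. -/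
def Invol : Prop := S.r ∘ S.r = id

/-- The defining relations `x·y = σ_x(y)·γ_y(x)` of the structure group. -/
def rels : Set (FreeGroup X) :=
  { w | ∃ x y : X,
      w = FreeGroup.of x * FreeGroup.of y *
        (FreeGroup.of (S.σ x y) * FreeGroup.of (S.γ y x))⁻¹ }

/-- The structure group `G(X,r) = Gp⟨X ∣ x·y = σ_x(y)·γ_y(x)⟩`. -/
abbrev G := PresentedGroup S.rels

/-- The image of a generator `x ∈ X` in the structure group. -/
def gen (x : X) : S.G := PresentedGroup.of x

end YBSol

/-- `sigIter S D k x` is the composite `σ_x ∘ σ_{D(x)} ∘ ⋯ ∘ σ_{D^{k-1}(x)}`. -/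
def sigIter (S : YBSol X) (D : X → X) : ℕ → X → X → X
  | 0, _ => id
  | k + 1, x => S.σ x ∘ sigIter S D k (D x)

end YB

theorem aux_ai {α : Type*} (f : Equiv.Perm α) (x : α) : f (f⁻¹ x) = x :=
  Equiv.apply_symm_apply f x

theorem aux_ia {α : Type*} (f : Equiv.Perm α) (x : α) : f⁻¹ (f x) = x :=
  Equiv.symm_apply_apply f x

theorem aux_lift {X α : Type*} (T : X → Equiv.Perm α) (hT : ∀ x y, T x * T y = T y * T x) :
    ∃ F : Multiplicative (X →₀ ℤ) →* Equiv.Perm α,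
      ∀ x, F (Multiplicative.ofAdd (Finsupp.single x 1)) = T x := by
  let _ : CommGroup (Subgroup.closure (Set.range T)) :=
    Subgroup.closureCommGroupOfComm (by
      rintro _ ⟨x, rfl⟩ _ ⟨y, rfl⟩
      exact hT x y)
  let L : (X →₀ ℤ) →+ Additive (Subgroup.closure (Set.range T)) :=
    Finsupp.liftAddHom (fun x => zmultiplesHom _ (Additive.ofMul
      (⟨T x, Subgroup.subset_closure ⟨x, rfl⟩⟩ : Subgroup.closure (Set.range T))))
  refine ⟨(Subgroup.closure (Set.range T)).subtype.comp (AddMonoidHom.toMultiplicativeLeft L), ?_⟩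
  intro x
  simp [L]

theorem aux_ind {X : Type*} (S : YBSol X) (p : S.G → Prop) (h1 : p 1)
    (hg : ∀ x, p (S.gen x)) (hm : ∀ a b, p a → p b → p (a * b)) (hi : ∀ a, p a → p a⁻¹)
    (g : S.G) : p g := by
  have hc : g ∈ Subgroup.closure (Set.range (PresentedGroup.of (rels := S.rels))) := by
    rw [PresentedGroup.closure_range_of]; trivial
  induction hc using Subgroup.closure_induction with
  | mem x hx => obtain ⟨x, rfl⟩ := hx; exact hg x
  | one => exact h1
  | mul a b _ _ ha hb => exact hm a b ha hb
  | inv a _ ha => exact hi a ha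

theorem aux_ind_fs {X : Type*} (p : (X →₀ ℤ) → Prop) (h0 : p 0)
    (hs : ∀ x, p (Finsupp.single x 1)) (ha : ∀ a b, p a → p b → p (a + b))
    (hn : ∀ a, p a → p (-a)) (v : X →₀ ℤ) : p v := by
  induction v using Finsupp.induction_linear with
  | zero => exact h0
  | add f g hf hg => exact ha f g hf hg
  | single x n =>
    induction n using Int.induction_on with
    | zero => simpa using h0
    | succ i hi => rw [Finsupp.single_add]; exact ha _ _ hi (hs x)
    | pred i hi =>
      rw [sub_eq_add_neg, Finsupp.single_add, Finsupp.single_neg (b := (1 : ℤ))]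
      exact ha _ _ hi (hn _ (hs x))

/-- There is a bijective 1-cocycle `π : G(X,r) → ℤ^X` with `π(x) = t_x` and
`π(gh) = π(g) + g • π(h)`, where `g • t_x = t_{φ(g)(x)}`. -/
theorem exists_bijective_one_cocycle {X : Type*} (S : YBSol X)
    (hnd : S.NonDeg) (hinv : S.Invol)
    (φ : S.G →* Equiv.Perm X) (hφ : ∀ x y : X, φ (S.gen x) y = S.σ x y) :
    ∃ π : S.G → (X →₀ ℤ), Function.Bijective π ∧
      (∀ x : X, π (S.gen x) = Finsupp.single x 1) ∧
      (∀ g h : S.G, π (g * h) = π g + Finsupp.mapDomain (⇑(φ g)) (π h)) := by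
  have hi1 : ∀ x y, S.σ (S.σ x y) (S.γ y x) = x := fun x y =>
    congrArg Prod.fst (congrFun hinv (x, y))
  have hi2 : ∀ x y, S.γ (S.γ y x) (S.σ x y) = y := fun x y =>
    congrArg Prod.snd (congrFun hinv (x, y))
  have hrel : ∀ x y, S.gen x * S.gen y = S.gen (S.σ x y) * S.gen (S.γ y x) := by
    intro x y
    have : (PresentedGroup.mk S.rels) (FreeGroup.of x * FreeGroup.of y *
        (FreeGroup.of (S.σ x y) * FreeGroup.of (S.γ y x))⁻¹) = 1 :=
      PresentedGroup.one_of_mem ⟨x, y, rfl⟩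
    rw [map_mul, map_inv, mul_inv_eq_one, map_mul, map_mul] at this
    exact this
  -- the cocycle
  let A : X → Equiv.Perm (X →₀ ℤ) := fun x =>
    (Finsupp.domCongr (M := ℤ) (φ (S.gen x))).toEquiv.trans (Equiv.addLeft (Finsupp.single x 1))
  have hA : ∀ x v, A x v = Finsupp.single x 1 + Finsupp.mapDomain (φ (S.gen x)) v := by
    intro x v
    simp [A, Finsupp.equivMapDomain_eq_mapDomain]
  have hAr : ∀ w ∈ S.rels, FreeGroup.lift A w = 1 := by
    rintro w ⟨x, y, rfl⟩
    rw [map_mul, map_inv, mul_inv_eq_one, map_mul, map_mul]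
    simp only [FreeGroup.lift_apply_of]
    ext1 v
    simp only [Equiv.Perm.mul_apply, hA, Finsupp.mapDomain_add, Finsupp.mapDomain_single,
      ← Finsupp.mapDomain_comp, ← Equiv.Perm.coe_mul, ← map_mul, hrel x y]
    rw [hφ, hφ, hi1]
    abel
  let ρ : S.G →* Equiv.Perm (X →₀ ℤ) := PresentedGroup.toGroup hAr
  have hρg : ∀ x, ρ (S.gen x) = A x := fun x => PresentedGroup.toGroup.of hAr
  have hρ : ∀ g v, ρ g v = ρ g 0 + Finsupp.mapDomain (φ g) v := by
    intro g
    induction g using aux_ind with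
    | h1 => intro v; simp [Finsupp.mapDomain_id]
    | hg x => intro v; rw [hρg, hA, hA]; simp
    | hm a b ha hb =>
      intro v
      rw [map_mul, Equiv.Perm.mul_apply, Equiv.Perm.mul_apply, hb, ha, ha (ρ b 0),
        Finsupp.mapDomain_add, map_mul, Equiv.Perm.coe_mul, Finsupp.mapDomain_comp, add_assoc]
    | hi a ha =>
      intro v
      apply (ρ a).injective
      rw [map_inv, aux_ai, ha, Finsupp.mapDomain_add, ← add_assoc, ← ha,
        aux_ai, ← Finsupp.mapDomain_comp, ← Equiv.Perm.coe_mul, ← map_mul]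
      simp [Finsupp.mapDomain_id]
  have hπm : ∀ g h : S.G, ρ (g * h) 0 = ρ g 0 + Finsupp.mapDomain (φ g) (ρ h 0) := by
    intro g h
    rw [map_mul, Equiv.Perm.mul_apply, hρ]
  have hπg : ∀ x, ρ (S.gen x) 0 = Finsupp.single x 1 := by
    intro x; rw [hρg, hA]; simp
  -- the translations
  let t : X → S.G → S.G := fun x g => g * S.gen ((φ g)⁻¹ x)
  have hdiag : ∀ y z, S.σ y z = y → S.γ z y = z := by
    intro y z h
    have := hi1 y z
    rw [h] at this
    exact (hnd.1 y).1 (this.trans h.symm)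
  have tbij : ∀ x, Function.Bijective (t x) := by
    intro x
    constructor
    · intro g g' h
      simp only [t] at h
      have key : ∀ g : S.G, S.σ ((φ g)⁻¹ x) ((φ (g * S.gen ((φ g)⁻¹ x)))⁻¹ x)
          = (φ g)⁻¹ x := by
        intro g
        rw [← hφ, map_mul, mul_inv_rev, Equiv.Perm.mul_apply, aux_ai]
      have k1 := hdiag _ _ (key g)
      have k2 := hdiag _ _ (key g')
      rw [← h] at k2
      have := (hnd.2 _).1 (k1.trans k2.symm)
      rw [this] at h
      exact mul_right_cancel h
    · intro k
      obtain ⟨y, hy⟩ := (hnd.2 ((φ k)⁻¹ x)).2 ((φ k)⁻¹ x)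
      have hs : S.σ y ((φ k)⁻¹ x) = y := by
        have := hi2 y ((φ k)⁻¹ x)
        rw [hy] at this
        exact (hnd.2 _).1 (this.trans hy.symm)
      refine ⟨k * (S.gen y)⁻¹, ?_⟩
      have : (φ (k * (S.gen y)⁻¹))⁻¹ x = y := by
        rw [map_mul, map_inv, mul_inv_rev, inv_inv, Equiv.Perm.mul_apply, hφ, hs]
      simp only [t]
      rw [this, inv_mul_cancel_right]
  let T : X → Equiv.Perm S.G := fun x => Equiv.ofBijective (t x) (tbij x)
  have hTa : ∀ x g, T x g = g * S.gen ((φ g)⁻¹ x) := fun x g => rfl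
  have hT : ∀ x y, T x * T y = T y * T x := by
    intro x y
    ext1 g
    simp only [Equiv.Perm.mul_apply, hTa, mul_assoc]
    congr 1
    generalize hb : (φ g)⁻¹ y = b
    generalize ha : (φ g)⁻¹ x = a
    simp only [map_mul, mul_inv_rev, Equiv.Perm.mul_apply, ha, hb]
    have h1 : S.σ b ((φ (S.gen b))⁻¹ a) = a := by rw [← hφ, aux_ai]
    rw [hrel, h1]
    congr 2
    have h2 := hi1 b ((φ (S.gen b))⁻¹ a)
    rw [h1, ← hφ] at h2
    rw [Equiv.Perm.eq_inv_iff_eq]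
    exact h2
  obtain ⟨F, hF⟩ := aux_lift T hT
  have hFadd : ∀ v w g, F (Multiplicative.ofAdd (v + w)) g
      = F (Multiplicative.ofAdd v) (F (Multiplicative.ofAdd w) g) := by
    intro v w g
    rw [ofAdd_add, map_mul, Equiv.Perm.mul_apply]
  have hF0 : ∀ g, F (Multiplicative.ofAdd 0) g = g := by
    intro g
    rw [ofAdd_zero, map_one F, Equiv.Perm.one_apply]
  have hFneg : ∀ v g, F (Multiplicative.ofAdd v) (F (Multiplicative.ofAdd (-v)) g) = g := by
    intro v g
    rw [← hFadd, add_neg_cancel, hF0]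
  have hπF : ∀ v g, ρ (F (Multiplicative.ofAdd v) g) 0 = v + ρ g 0 := by
    intro v
    induction v using aux_ind_fs with
    | h0 => intro g; rw [hF0, zero_add]
    | hs x =>
      intro g
      rw [hF, hTa, hπm, hπg, Finsupp.mapDomain_single, aux_ai, add_comm]
    | ha a b iha ihb => intro g; rw [hFadd, iha, ihb, add_assoc]
    | hn a iha =>
      intro g
      have := iha (F (Multiplicative.ofAdd (-a)) g)
      rw [hFneg] at this
      rw [this]; abel
  have hFeq : ∀ (g : S.G) v k, F (Multiplicative.ofAdd (Finsupp.mapDomain (φ g) v)) (g * k)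
      = g * F (Multiplicative.ofAdd v) k := by
    intro g v
    induction v using aux_ind_fs with
    | h0 => intro k; rw [Finsupp.mapDomain_zero, hF0, hF0]
    | hs x =>
      intro k
      rw [Finsupp.mapDomain_single, hF, hF, hTa, hTa, mul_assoc, map_mul, mul_inv_rev,
        Equiv.Perm.mul_apply, aux_ia]
    | ha a b iha ihb => intro k; rw [Finsupp.mapDomain_add, hFadd, ihb, iha, hFadd]
    | hn a iha =>
      intro k
      apply (F (Multiplicative.ofAdd (Finsupp.mapDomain (φ g) a))).injective
      rw [iha, hFneg, ← hFadd, ← Finsupp.mapDomain_add, add_neg_cancel, Finsupp.mapDomain_zero,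
        hF0]
  have hm : ∀ a b : S.G, F (Multiplicative.ofAdd (ρ a 0)) 1 = a →
      F (Multiplicative.ofAdd (ρ (a * b) 0)) 1 = a * F (Multiplicative.ofAdd (ρ b 0)) 1 := by
    intro a b ha
    rw [hπm, add_comm, hFadd, ha, ← hFeq, mul_one]
  have hleft : ∀ g, F (Multiplicative.ofAdd (ρ g 0)) 1 = g := by
    intro g
    induction g using aux_ind with
    | h1 => rw [map_one ρ, Equiv.Perm.one_apply, hF0]
    | hg x => rw [hπg, hF, hTa]; simp
    | hm a b ha hb => rw [hm a b ha, hb]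
    | hi a ha =>
      have := hm a a⁻¹ ha
      rw [mul_inv_cancel, map_one ρ, Equiv.Perm.one_apply, hF0] at this
      exact (inv_eq_of_mul_eq_one_right this.symm).symm
  refine ⟨fun g => ρ g 0, ⟨?_, ?_⟩, hπg, hπm⟩
  · intro g h e
    simp only at e
    rw [← hleft g, e, hleft]
  · intro v
    refine ⟨F (Multiplicative.ofAdd v) 1, ?_⟩
    simp only
    rw [hπF, map_one ρ, Equiv.Perm.one_apply, add_zero]
end

section
/- Let (X,r) be a non-degenerate involutive set-theoretic solution of the Yang–Baxter equation, and let D : X → X be defined by D(x) = σ_x^{-1}(x). Then D is a bijection of X, and its inverse is given by D^{-1}(y) = γ_y^{-1}(y) for every y ∈ X. -/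
open scoped BigOperators

/-- The map `D(x) = σ_x^{-1}(x)` is a bijection of `X`, with inverse
`y ↦ γ_y^{-1}(y)`. -/
theorem D_bijective {X : Type*} (S : YBSol X)
    (hnd : S.NonDeg) (hinv : S.Invol)
    (D E : X → X) (hD : ∀ x, S.σ x (D x) = x) (hE : ∀ y, S.γ y (E y) = y) :
    Function.Bijective D ∧ Function.LeftInverse E D ∧ Function.RightInverse E D := by
  have inv : ∀ p, S.r (S.r p) = p := fun p => congrFun hinv p
  have h1 : Function.LeftInverse E D := by
    intro x
    have e : S.r (x, D x) = (x, S.γ (D x) x) := Prod.ext (hD x) rfl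
    have e2 : S.r (x, S.γ (D x) x) = (x, D x) := by rw [← e]; exact inv _
    have e3 : S.σ x (S.γ (D x) x) = x := congrArg Prod.fst e2
    have e4 : S.γ (D x) x = D x := (hnd.1 x).1 (e3.trans (hD x).symm)
    exact (hnd.2 (D x)).1 ((hE (D x)).trans e4.symm)
  have h2 : Function.RightInverse E D := by
    intro y
    have e : S.r (E y, y) = (S.σ (E y) y, y) := Prod.ext rfl (hE y)
    have e2 : S.r (S.σ (E y) y, y) = (E y, y) := by rw [← e]; exact inv _
    have e3 : S.γ y (S.σ (E y) y) = y := congrArg Prod.snd e2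
    have e4 : S.σ (E y) y = E y := (hnd.2 y).1 (e3.trans (hE y).symm)
    exact (hnd.1 (E y)).1 ((hD (E y)).trans e4.symm)
  exact ⟨⟨h1.injective, h2.surjective⟩, h1, h2⟩
end

section
/- Let (X,r) be a non-degenerate involutive set-theoretic solution of the Yang–Baxter equation and let D : X → X be defined by D(x) = σ_x^{-1}(x). Then the following are equivalent: (1) (X,r) satisfies condition (C), i.e., σ_x ∘ σ_y = id_X for all x,y ∈ X with r(x,y) = (x,y); (2) σ_x ∘ σ_{D(x)} = id_X for every x ∈ X. -/
open scoped BigOperators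

/-- Condition (C) — `σ_x ∘ σ_y = id` whenever `r(x,y) = (x,y)` — is equivalent to
`σ_x ∘ σ_{D(x)} = id` for every `x`. -/
theorem condition_C_iff {X : Type*} (S : YBSol X)
    (hnd : S.NonDeg) (hinv : S.Invol)
    (D : X → X) (hD : ∀ x, S.σ x (D x) = x) :
    (∀ x y : X, S.r (x, y) = (x, y) → ∀ z, S.σ x (S.σ y z) = z) ↔
      (∀ x z : X, S.σ x (S.σ (D x) z) = z) := by
  constructor
  · intro h x z
    apply h x (D x)
    have h1 : S.r (x, D x) = (x, (S.r (x, D x)).2) := Prod.ext (hD x) rfl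
    have h2 : S.r (S.r (x, D x)) = (x, D x) := congrFun hinv (x, D x)
    rw [h1] at h2
    have h3 : (S.r (x, D x)).2 = D x := by
      apply (hnd.1 x).1
      rw [hD x]
      exact congrArg Prod.fst h2
    rw [h3] at h1
    exact h1
  · intro h x y hxy z
    have hy : y = D x := by
      apply (hnd.1 x).1
      rw [hD x]
      exact congrArg Prod.fst hxy
    rw [hy]
    exact h x z
end

section
/- Let (X,r) be a non-degenerate involutive set-theoretic solution and let D : X → X be defined by D(x) = σ_x^{-1}(x). If (X,r) is of class m, i.e., σ_x ∘ σ_{D(x)} ∘ σ_{D²(x)} ∘ ⋯ ∘ σ_{D^{m-1}(x)} = id_X for every x ∈ X, then D^m(x) = x for every x ∈ X (the m-th iterate of D is the identity). -/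
open scoped BigOperators

/-- If `(X,r)` is of class `m`, i.e. `σ_x ∘ σ_{D(x)} ∘ ⋯ ∘ σ_{D^{m-1}(x)} = id` for
every `x`, then `D^m = id`. -/
theorem D_iterate_eq_id_of_class {X : Type*} (S : YBSol X)
    (hnd : S.NonDeg) (hinv : S.Invol)
    (D : X → X) (hD : ∀ x, S.σ x (D x) = x)
    (m : ℕ) (hm : ∀ x y : X, sigIter S D m x y = y) :
    ∀ x : X, D^[m] x = x := by
  have key : ∀ (k : ℕ) (x : X), sigIter S D k x (D^[k] x) = x := by
    intro k
    induction k with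
    | zero => intro x; rfl
    | succ k ih =>
      intro x
      change S.σ x (sigIter S D k (D x) (D^[k] (D x))) = x
      rw [ih, hD]
  intro x
  rw [← hm x (D^[m] x)]
  exact key m x
end

section
/- Let (X,r) be a non-degenerate involutive set-theoretic solution with structure group G(X,r), bijective 1-cocycle π : G(X,r) → ℤ^X, and D(x) = σ_x^{-1}(x). Then for every x ∈ X and every k ≥ 1, π(x·D(x)·D²(x)⋯D^{k-1}(x)) = k·t_x. In particular, if (X,r) is of class m, the frozen element θ_x = x·D(x)⋯D^{m-1}(x) satisfies π(θ_x) = m·t_x. -/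
open scoped BigOperators

/-- `π(x·D(x)⋯D^{k-1}(x)) = k·t_x` for every `k ≥ 1`; in particular, if `(X,r)` is
of class `m`, the frozen element `θ_x = x·D(x)⋯D^{m-1}(x)` satisfies `π(θ_x) = m·t_x`. -/
theorem pi_of_frozen {X : Type*} (S : YBSol X)
    (hnd : S.NonDeg) (hinv : S.Invol)
    (φ : S.G →* Equiv.Perm X) (hφ : ∀ x y : X, φ (S.gen x) y = S.σ x y)
    (π : S.G → (X →₀ ℤ)) (hπbij : Function.Bijective π)
    (hπgen : ∀ x : X, π (S.gen x) = Finsupp.single x 1)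
    (hπcoc : ∀ g h : S.G, π (g * h) = π g + Finsupp.mapDomain (⇑(φ g)) (π h))
    (D : X → X) (hD : ∀ x, S.σ x (D x) = x)
    (m : ℕ) (θ : X → S.G)
    (hθ : ∀ x : X, θ x = (((List.range m).map fun i => S.gen (D^[i] x)).prod)) :
    (∀ (x : X) (k : ℕ), 1 ≤ k →
        π (((List.range k).map fun i => S.gen (D^[i] x)).prod) =
          Finsupp.single x (k : ℤ)) ∧
    ((∀ x y : X, sigIter S D m x y = y) →
        ∀ x : X, π (θ x) = Finsupp.single x (m : ℤ)) := by
  have h1 : π 1 = 0 := by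
    have h := hπcoc 1 1
    have h2 : (⇑(φ 1) : X → X) = id := by rw [map_one]; rfl
    rw [mul_one, h2, Finsupp.mapDomain_id] at h
    exact left_eq_add.mp h
  have key : ∀ (k : ℕ) (x : X),
      π (((List.range k).map fun i => S.gen (D^[i] x)).prod) =
          Finsupp.single x (k : ℤ) := by
    intro k
    induction k with
    | zero => intro x; simp [h1]
    | succ k ih =>
      intro x
      have e : ((List.range (k + 1)).map fun i => S.gen (D^[i] x)).prod =
          S.gen x * ((List.range k).map fun i => S.gen (D^[i] (D x))).prod := by
        rw [List.range_succ_eq_map, List.map_cons, List.prod_cons, List.map_map]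
        rfl
      rw [e, hπcoc, ih, hπgen, Finsupp.mapDomain_single, hφ, hD, ← Finsupp.single_add]
      congr 1
      push_cast
      ring
  refine ⟨fun x k _ => key k x, fun _ x => ?_⟩
  rw [hθ]
  exact key m x
end

section
/- Let (X,r) be a non-degenerate involutive set-theoretic solution of class m, with structure group G(X,r), bijective 1-cocycle π : G(X,r) → ℤ^X, frozen elements θ_x (x ∈ X), and N the subgroup of G(X,r) generated by {θ_x : x ∈ X}. Then for all x_{i_1},…,x_{i_k} ∈ X and integers α_1,…,α_k, π(θ_{x_{i_1}}^{α_1} ⋯ θ_{x_{i_k}}^{α_k}) = m·∑_{j=1}^{k} α_j t_{x_{i_j}}; moreover, for g ∈ G(X,r), g ∈ N if and only if every coordinate of π(g) (in the basis {t_x}) is divisible by m. -/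
open scoped BigOperators

/-- `π(θ_{i_1}^{α_1} ⋯ θ_{i_k}^{α_k}) = m·∑ α_j t_{i_j}`, and `g ∈ N` iff every
coordinate of `π(g)` is divisible by `m`. -/
theorem pi_of_N {X : Type*} (S : YBSol X)
    (hnd : S.NonDeg) (hinv : S.Invol)
    (φ : S.G →* Equiv.Perm X) (hφ : ∀ x y : X, φ (S.gen x) y = S.σ x y)
    (π : S.G → (X →₀ ℤ)) (hπbij : Function.Bijective π)
    (hπgen : ∀ x : X, π (S.gen x) = Finsupp.single x 1)
    (hπcoc : ∀ g h : S.G, π (g * h) = π g + Finsupp.mapDomain (⇑(φ g)) (π h))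
    (D : X → X) (hD : ∀ x, S.σ x (D x) = x)
    (m : ℕ) (hm : ∀ x y : X, sigIter S D m x y = y)
    (θ : X → S.G)
    (hθ : ∀ x : X, θ x = (((List.range m).map fun i => S.gen (D^[i] x)).prod)) :
    (∀ (k : ℕ) (xs : Fin k → X) (α : Fin k → ℤ),
        π ((List.ofFn fun j => θ (xs j) ^ α j).prod) =
          ∑ j : Fin k, Finsupp.single (xs j) ((m : ℤ) * α j)) ∧
    (∀ g : S.G, g ∈ Subgroup.closure (Set.range θ) ↔ ∀ x : X, (m : ℤ) ∣ π g x) := by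
  have hP : ∀ (k : ℕ) (x : X),
      (∀ y, φ (((List.range k).map fun i => S.gen (D^[i] x)).prod) y = sigIter S D k x y) ∧
      π (((List.range k).map fun i => S.gen (D^[i] x)).prod) = Finsupp.single x (k : ℤ) := by
    have h1 : π 1 = 0 := by
      have := hπcoc 1 1
      simp only [mul_one, map_one, Equiv.Perm.coe_one, Finsupp.mapDomain_id] at this
      simpa using this
    intro k
    induction k with
    | zero => intro x; simp [sigIter, h1]
    | succ k ih =>
      intro x
      obtain ⟨a, b⟩ := ih (D x)
      have e : ((List.range (k+1)).map fun i => S.gen (D^[i] x)).prod =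
          S.gen x * ((List.range k).map fun i => S.gen (D^[i] (D x))).prod := by
        rw [List.range_succ_eq_map]
        simp [Function.comp_def]
      rw [e]
      constructor
      · intro y
        rw [map_mul, Equiv.Perm.mul_apply, a, hφ]
        rfl
      · rw [hπcoc, b, hπgen, Finsupp.mapDomain_single, hφ, hD, ← Finsupp.single_add]
        congr 1
        push_cast
        ring
  let ψ : φ.ker →* Multiplicative (X →₀ ℤ) := MonoidHom.mk' (fun g => Multiplicative.ofAdd (π g.1)) (by
    rintro ⟨g, hg⟩ ⟨h, hh⟩
    rw [MonoidHom.mem_ker] at hg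
    rw [← ofAdd_add]
    congr 1
    simp only [Subgroup.coe_mul, hπcoc, hg, Equiv.Perm.coe_one, Finsupp.mapDomain_id])
  have hker : ∀ x, θ x ∈ φ.ker := by
    intro x
    rw [MonoidHom.mem_ker]
    ext y
    rw [hθ, (hP m x).1, hm]
    rfl
  have hπθ : ∀ x, π (θ x) = Finsupp.single x (m : ℤ) := fun x => by
    rw [hθ, (hP m x).2]
  have hone : π 1 = 0 := congrArg Multiplicative.toAdd (map_one ψ)
  have hmul : ∀ g ∈ φ.ker, ∀ h ∈ φ.ker, π (g * h) = π g + π h := fun g hg h hh =>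
    congrArg Multiplicative.toAdd (map_mul ψ ⟨g, hg⟩ ⟨h, hh⟩)
  have hneg : ∀ g ∈ φ.ker, π (g⁻¹) = - π g := fun g hg =>
    congrArg Multiplicative.toAdd (map_inv ψ ⟨g, hg⟩)
  have hpow : ∀ x (a : ℤ), π (θ x ^ a) = Finsupp.single x ((m : ℤ) * a) := by
    intro x a
    have h : π (θ x ^ a) = a • π (θ x) :=
      congrArg Multiplicative.toAdd (map_zpow ψ ⟨θ x, hker x⟩ a)
    rw [h, hπθ, Finsupp.smul_single, smul_eq_mul, mul_comm]
  have hle : Subgroup.closure (Set.range θ) ≤ φ.ker := by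
    rw [Subgroup.closure_le]
    rintro _ ⟨x, rfl⟩
    exact hker x
  refine ⟨?_, ?_⟩
  · intro k
    induction k with
    | zero => intro xs α; simpa using hone
    | succ k ih =>
      intro xs α
      rw [List.ofFn_succ, List.prod_cons, Fin.sum_univ_succ, ← ih, ← hpow]
      apply hmul _ (Subgroup.zpow_mem _ (hker _) _)
      apply Subgroup.list_prod_mem
      intro g hg
      rw [List.mem_ofFn] at hg
      obtain ⟨j, rfl⟩ := hg
      exact Subgroup.zpow_mem _ (hker _) _
  · intro g
    constructor
    · intro hg
      induction hg using Subgroup.closure_induction with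
      | mem g hg =>
        obtain ⟨x, rfl⟩ := hg
        intro y
        classical
        rw [hπθ, Finsupp.single_apply]
        split_ifs <;> simp
      | one => simp [hone]
      | mul a b ha hb iha ihb =>
        intro x
        rw [hmul a (hle ha) b (hle hb)]
        exact dvd_add (iha x) (ihb x)
      | inv a ha iha =>
        intro x
        rw [hneg a (hle ha)]
        exact (dvd_neg).2 (iha x)
    · intro hg
      have key : ∀ f : X →₀ ℤ, ∃ h ∈ Subgroup.closure (Set.range θ), π h = (m : ℤ) • f := by
        intro f
        induction f using Finsupp.induction_linear with
        | zero => exact ⟨1, one_mem _, by simp [hone]⟩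
        | add f g hf hg =>
          obtain ⟨a, ha, ha'⟩ := hf
          obtain ⟨b, hb, hb'⟩ := hg
          exact ⟨a * b, mul_mem ha hb, by rw [hmul a (hle ha) b (hle hb), ha', hb', smul_add]⟩
        | single x c =>
          exact ⟨θ x ^ c, Subgroup.zpow_mem _ (Subgroup.subset_closure (Set.mem_range_self x)) _, by
            rw [hpow, Finsupp.smul_single, smul_eq_mul]⟩
      obtain ⟨h, hh, he⟩ := key ((π g).mapRange (fun z => z / (m : ℤ)) (by simp))
      have : π h = π g := by
        rw [he]
        ext x
        simpa using Int.mul_ediv_cancel' (hg x)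
      rw [← hπbij.1 this]
      exact hh
end

section
/- Let (X,r) be a non-degenerate involutive set-theoretic solution with |X| = n finite, of class m, with structure group G(X,r), bijective 1-cocycle π, frozen elements θ_x, and N the subgroup of G(X,r) generated by {θ_x : x ∈ X}. Then N is a normal subgroup of G(X,r), N is free abelian of rank n, and the quotient group G(X,r)/N is finite of order m^n. -/
open scoped BigOperators

theorem aux_theta {X : Type*} (S : YBSol X)
    (φ : S.G →* Equiv.Perm X) (hφ : ∀ x y : X, φ (S.gen x) y = S.σ x y)
    (π : S.G → (X →₀ ℤ)) (h1 : π 1 = 0)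
    (hπgen : ∀ x : X, π (S.gen x) = Finsupp.single x 1)
    (hπcoc : ∀ g h : S.G, π (g * h) = π g + Finsupp.mapDomain (⇑(φ g)) (π h))
    (D : X → X) (hD : ∀ x, S.σ x (D x) = x) (k : ℕ) : ∀ x : X,
    (∀ y, φ (((List.range k).map fun i => S.gen (D^[i] x)).prod) y = sigIter S D k x y) ∧
    π (((List.range k).map fun i => S.gen (D^[i] x)).prod) = Finsupp.single x (k : ℤ) := by
  induction k with
  | zero => intro x; simp [sigIter, h1]
  | succ k ih =>
    intro x
    have e : (((List.range (k+1)).map fun i => S.gen (D^[i] x)).prod)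
        = S.gen x * (((List.range k).map fun i => S.gen (D^[i] (D x))).prod) := by
      rw [List.range_succ_eq_map]
      simp [Function.comp_def]
    obtain ⟨ha, hb⟩ := ih (D x)
    rw [e]
    constructor
    · intro y
      rw [map_mul, Equiv.Perm.mul_apply, ha, hφ]
      rfl
    · rw [hπcoc, hb, hπgen, Finsupp.mapDomain_single, hφ, hD, ← Finsupp.single_add]
      congr 1
      push_cast
      ring

/-- The subgroup `N` generated by the frozen elements is normal, free abelian of rank
`n = |X|`, and the quotient `G(X,r)/N` is finite of order `m^n`. -/
theorem N_normal_free_abelian_index {X : Type*} [Fintype X] (S : YBSol X)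
    (hnd : S.NonDeg) (hinv : S.Invol)
    (φ : S.G →* Equiv.Perm X) (hφ : ∀ x y : X, φ (S.gen x) y = S.σ x y)
    (π : S.G → (X →₀ ℤ)) (hπbij : Function.Bijective π)
    (hπgen : ∀ x : X, π (S.gen x) = Finsupp.single x 1)
    (hπcoc : ∀ g h : S.G, π (g * h) = π g + Finsupp.mapDomain (⇑(φ g)) (π h))
    (D : X → X) (hD : ∀ x, S.σ x (D x) = x)
    (m : ℕ) (hm1 : 1 ≤ m) (hm : ∀ x y : X, sigIter S D m x y = y)
    (θ : X → S.G)
    (hθ : ∀ x : X, θ x = (((List.range m).map fun i => S.gen (D^[i] x)).prod)) :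
    (Subgroup.closure (Set.range θ)).Normal ∧
    Nonempty (↥(Subgroup.closure (Set.range θ)) ≃*
      Multiplicative (Fin (Fintype.card X) → ℤ)) ∧
    (Subgroup.closure (Set.range θ)).index = m ^ Fintype.card X := by
  classical
  have h1 : π 1 = 0 := by
    have h := hπcoc 1 1
    simpa [Finsupp.mapDomain_id] using h
  have hθφ : ∀ x, φ (θ x) = 1 := by
    intro x
    ext y
    rw [hθ, (aux_theta S φ hφ π h1 hπgen hπcoc D hD m x).1, hm]
    rfl
  have hθπ : ∀ x, π (θ x) = Finsupp.single x (m : ℤ) := by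
    intro x
    rw [hθ, (aux_theta S φ hφ π h1 hπgen hπcoc D hD m x).2]
  set N := Subgroup.closure (Set.range θ) with hN
  have hNφ : ∀ g ∈ N, φ g = 1 := by
    have : N ≤ φ.ker := by
      rw [hN, Subgroup.closure_le]
      rintro _ ⟨x, rfl⟩
      exact hθφ x
    exact fun g hg => this hg
  have hmul : ∀ g ∈ N, ∀ h, π (g * h) = π g + π h := by
    intro g hg h
    rw [hπcoc, hNφ g hg]
    simp [Finsupp.mapDomain_id]
  let p : N →* Multiplicative (X →₀ ℤ) :=
    { toFun := fun g => Multiplicative.ofAdd (π g)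
      map_one' := by simp [h1]
      map_mul' := fun a b => by
        rw [Subgroup.coe_mul, hmul _ a.2, ofAdd_add] }
  have hmem : ∀ x, θ x ∈ N := fun x => Subgroup.subset_closure ⟨x, rfl⟩
  have hsurj : ∀ v : X →₀ ℤ, ∃ g ∈ N, π g = (m : ℤ) • v := by
    intro v
    induction v using Finsupp.induction_linear with
    | zero => exact ⟨1, N.one_mem, by simp [h1]⟩
    | add f g hf hg =>
      obtain ⟨a, ha, ha'⟩ := hf
      obtain ⟨b, hb, hb'⟩ := hg
      exact ⟨a * b, N.mul_mem ha hb, by rw [hmul a ha, ha', hb', smul_add]⟩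
    | single x a =>
      refine ⟨θ x ^ a, N.zpow_mem (hmem x) a, ?_⟩
      have h := map_zpow p ⟨θ x, hmem x⟩ a
      have h2 : π (θ x ^ a) = a • π (θ x) := h
      rw [h2, hθπ]
      simp [mul_comm]
  have hdvd : ∀ g ∈ N, ∀ x, (m : ℤ) ∣ π g x := by
    intro g hg
    refine Subgroup.closure_induction (p := fun g _ => ∀ x, (m : ℤ) ∣ π g x) ?_ ?_ ?_ ?_ hg
    · rintro _ ⟨y, rfl⟩ x
      rw [hθπ, Finsupp.single_apply]
      split_ifs <;> simp
    · intro x; simp [h1]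
    · intro a b ha hb iha ihb x
      rw [hmul a ha]
      exact dvd_add (iha x) (ihb x)
    · intro a ha iha x
      have h := hmul a ha a⁻¹
      rw [mul_inv_cancel, h1] at h
      have h' : π a⁻¹ = - π a := (neg_eq_of_add_eq_zero_right h.symm).symm
      rw [h']
      simpa using iha x
  have hchar : ∀ g, g ∈ N ↔ ∀ x, (m : ℤ) ∣ π g x := by
    intro g
    refine ⟨hdvd g, fun h => ?_⟩
    choose c hc using h
    obtain ⟨k, hk, hk'⟩ := hsurj (Finsupp.equivFunOnFinite.symm c)
    have : π k = π g := by
      rw [hk']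
      ext x
      simp [hc]
    rwa [← hπbij.1 this]
  have hmd : ∀ (e : Equiv.Perm X) (v : X →₀ ℤ),
      (∀ x, (m : ℤ) ∣ Finsupp.mapDomain e v x) ↔ ∀ x, (m : ℤ) ∣ v x := by
    intro e v
    constructor
    · intro h x
      have := h (e x)
      rwa [Finsupp.mapDomain_apply e.injective] at this
    · intro h x
      obtain ⟨y, rfl⟩ := e.surjective x
      rw [Finsupp.mapDomain_apply e.injective]
      exact h y
  have hinvl : ∀ g, π g⁻¹ = - Finsupp.mapDomain (φ g⁻¹) (π g) := by
    intro g
    have h := hπcoc g⁻¹ g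
    rw [inv_mul_cancel, h1] at h
    exact eq_neg_of_add_eq_zero_left h.symm
  have hcoset : ∀ g h, g⁻¹ * h ∈ N ↔ ∀ x, (m : ℤ) ∣ π h x - π g x := by
    intro g h
    rw [hchar]
    have : π (g⁻¹ * h) = Finsupp.mapDomain (φ g⁻¹) (π h - π g) := by
      rw [hπcoc, hinvl]
      have := (Finsupp.mapDomain.addMonoidHom (M := ℤ) (φ g⁻¹)).map_sub (π h) (π g)
      simp only [Finsupp.mapDomain.addMonoidHom_apply] at this
      rw [this]
      abel
    rw [this, hmd]
    simp
  have hmZ : (m : ℤ) ≠ 0 := by positivity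
  refine ⟨⟨?_⟩, ⟨?_⟩, ?_⟩
  · intro h hh g
    have e : g * h * g⁻¹ = (g⁻¹)⁻¹ * (h * g⁻¹) := by group
    rw [e, hcoset]
    intro x
    rw [hmul h hh]
    simpa using hdvd h hh x
  · let q : N →* Multiplicative (Fin (Fintype.card X) → ℤ) :=
      { toFun := fun g => Multiplicative.ofAdd
          (fun i => π g ((Fintype.equivFin X).symm i) / (m : ℤ))
        map_one' := by
          rw [← ofAdd_zero]
          congr 1
          ext i
          simp [h1]
        map_mul' := fun a b => by
          rw [← ofAdd_add]
          congr 1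
          ext i
          rw [Subgroup.coe_mul, hmul _ a.2]
          exact Int.add_ediv_of_dvd_left (hdvd _ a.2 _) }
    refine MulEquiv.ofBijective q ⟨?_, ?_⟩
    · intro a b hab
      apply Subtype.ext
      apply hπbij.1
      ext x
      have h := congrFun (Multiplicative.ofAdd.injective hab) (Fintype.equivFin X x)
      simp only [Equiv.symm_apply_apply] at h
      rw [← Int.ediv_mul_cancel (hdvd _ a.2 x), h, Int.ediv_mul_cancel (hdvd _ b.2 x)]
    · intro v
      obtain ⟨g, hg, hg'⟩ := hsurj (Finsupp.equivFunOnFinite.symm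
        (fun x => Multiplicative.toAdd v (Fintype.equivFin X x)))
      refine ⟨⟨g, hg⟩, ?_⟩
      apply Multiplicative.toAdd.injective
      funext i
      change π g ((Fintype.equivFin X).symm i) / (m : ℤ) = _
      rw [hg']
      simp
      exact Int.mul_ediv_cancel_left _ hmZ
  · haveI : NeZero m := ⟨by omega⟩
    let f : S.G ⧸ N → (X → ZMod m) := Quotient.lift (fun g x => ((π g x : ℤ) : ZMod m)) (by
      intro a b hab
      funext x
      have h : a⁻¹ * b ∈ N := QuotientGroup.leftRel_apply.1 hab
      exact (ZMod.intCast_eq_intCast_iff_dvd_sub _ _ _).2 ((hcoset a b).1 h x))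
    have hf : Function.Bijective f := by
      constructor
      · intro a b
        induction a using QuotientGroup.induction_on with | H a => ?_
        induction b using QuotientGroup.induction_on with | H b => ?_
        intro hab
        apply QuotientGroup.eq.2
        rw [hcoset]
        intro x
        exact (ZMod.intCast_eq_intCast_iff_dvd_sub _ _ _).1 (congrFun hab x)
      · intro v
        obtain ⟨g, hg⟩ := hπbij.2 (Finsupp.equivFunOnFinite.symm (fun x => ((v x).val : ℤ)))
        refine ⟨(g : S.G ⧸ N), ?_⟩
        funext x
        change ((π g x : ℤ) : ZMod m) = v x
        rw [hg]
        simp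
    rw [Subgroup.index, Nat.card_congr (Equiv.ofBijective f hf)]
    simp
end

section
/- Let (X,r) be a non-degenerate involutive set-theoretic solution of class m, with structure group G(X,r), homomorphism φ : G(X,r) → Sym(X), bijective 1-cocycle π : G(X,r) → ℤ^X, and N the subgroup generated by the frozen elements θ_x. If u ∈ Ker(φ), v ∈ G(X,r), and w ∈ G(X,r) satisfies N·w = N·u·v (i.e., w lies in the coset N·u·v), then every coordinate of π(w) − π(u) − π(v) in the basis {t_x} is divisible by m. -/
open scoped BigOperators

/-- If `u ∈ Ker(φ)` and `w` lies in the coset `N·u·v`, then every coordinate of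
`π(w) − π(u) − π(v)` is divisible by `m`. -/
theorem coset_representative_coords {X : Type*} (S : YBSol X)
    (hnd : S.NonDeg) (hinv : S.Invol)
    (φ : S.G →* Equiv.Perm X) (hφ : ∀ x y : X, φ (S.gen x) y = S.σ x y)
    (π : S.G → (X →₀ ℤ)) (hπbij : Function.Bijective π)
    (hπgen : ∀ x : X, π (S.gen x) = Finsupp.single x 1)
    (hπcoc : ∀ g h : S.G, π (g * h) = π g + Finsupp.mapDomain (⇑(φ g)) (π h))
    (D : X → X) (hD : ∀ x, S.σ x (D x) = x)
    (m : ℕ) (hm : ∀ x y : X, sigIter S D m x y = y)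
    (θ : X → S.G)
    (hθ : ∀ x : X, θ x = (((List.range m).map fun i => S.gen (D^[i] x)).prod))
    (u v w : S.G) (hu : u ∈ φ.ker)
    (hw : ∃ g ∈ Subgroup.closure (Set.range θ), w = g * (u * v)) :
    ∀ x : X, (m : ℤ) ∣ (π w - π u - π v) x := by
  have h1 : π 1 = 0 := by
    have h := hπcoc 1 1
    simp only [mul_one, map_one, Equiv.Perm.coe_one, Finsupp.mapDomain_id] at h
    exact left_eq_add.mp h
  have key : ∀ (k : ℕ) (x : X),
      π (((List.range k).map fun i => S.gen (D^[i] x)).prod) = Finsupp.single x (k : ℤ) ∧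
      ∀ y, φ (((List.range k).map fun i => S.gen (D^[i] x)).prod) y = sigIter S D k x y := by
    intro k
    induction k with
    | zero => intro x; simp [h1, sigIter]
    | succ k ih =>
      intro x
      have e : (((List.range (k+1)).map fun i => S.gen (D^[i] x)).prod)
          = S.gen x * (((List.range k).map fun i => S.gen (D^[i] (D x))).prod) := by
        rw [List.range_succ_eq_map]
        simp [List.map_map, Function.comp_def]
      rw [e]
      constructor
      · rw [hπcoc, (ih (D x)).1, hπgen, Finsupp.mapDomain_single, hφ, hD,
          ← Finsupp.single_add]
        congr 1
        push_cast
        ring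
      · intro y
        rw [map_mul, Equiv.Perm.mul_apply, (ih (D x)).2, hφ]
        rfl
  obtain ⟨g, hg, rfl⟩ := hw
  have hN : φ g = 1 ∧ ∀ x, (m : ℤ) ∣ π g x := by
    induction hg using Subgroup.closure_induction with
    | mem a ha =>
      obtain ⟨x, rfl⟩ := ha
      rw [hθ]
      refine ⟨?_, fun y => ?_⟩
      · ext y
        rw [(key m x).2, hm]
        rfl
      · classical
        rw [(key m x).1, Finsupp.single_apply]
        split_ifs <;> simp
    | one => simp [h1]
    | mul a b _ _ ha hb =>
      refine ⟨by rw [map_mul, ha.1, hb.1, one_mul], fun y => ?_⟩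
      rw [hπcoc, ha.1, Equiv.Perm.coe_one, Finsupp.mapDomain_id]
      exact dvd_add (ha.2 y) (hb.2 y)
    | inv a _ ha =>
      refine ⟨by rw [map_inv, ha.1, inv_one], fun y => ?_⟩
      have h := hπcoc a a⁻¹
      rw [mul_inv_cancel, h1, ha.1, Equiv.Perm.coe_one, Finsupp.mapDomain_id] at h
      rw [← neg_eq_of_add_eq_zero_right h.symm]
      exact (dvd_neg.mpr (ha.2 y))
  intro x
  rw [hπcoc, hπcoc, hN.1, MonoidHom.mem_ker.mp hu, Equiv.Perm.coe_one, Finsupp.mapDomain_id,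
    Finsupp.mapDomain_id]
  have : π g + (π u + π v) - π u - π v = π g := by abel
  rw [this]
  exact hN.2 x
end

section
/- Let (X,r) be a non-degenerate involutive set-theoretic solution with X = {x_1,…,x_n} finite, of class m, with structure group G(X,r), maps φ and π, matrix representation ψ : G(X,r) → GL_{n+1}(ℝ), frozen elements θ_{x_i}, and N the subgroup generated by the frozen elements. If g = h·s with h ∈ N and s ∈ G(X,r), then there exist integers α_1,…,α_n such that ψ(g) = ψ(s) + m·∑_{i=1}^{n} α_i E_i; equivalently, φ(g) = φ(s) and π(g) − π(s) = m·∑_{i=1}^{n} α_i t_{x_i}. -/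
open scoped BigOperators

section Mat

/-- The `(n+1) × (n+1)` real matrix with the permutation matrix of `p` in the upper-left
`n × n` block, the vector `v` in the first `n` entries of the last column, and last
row `(0,…,0,1)`. -/
noncomputable def matOf {n : ℕ} (p : Equiv.Perm (Fin n)) (v : Fin n → ℤ) :
    Matrix (Fin (n + 1)) (Fin (n + 1)) ℝ :=
  Matrix.of fun i j =>
    if hi : (i : ℕ) < n then
      if hj : (j : ℕ) < n then (if p ⟨j, hj⟩ = ⟨i, hi⟩ then (1 : ℝ) else 0)
      else ((v ⟨i, hi⟩ : ℤ) : ℝ)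
    else if (j : ℕ) < n then 0 else 1

/-- `E_k`: the `(n+1) × (n+1)` matrix with entry `1` in position `(k, n+1)` and `0` elsewhere. -/
noncomputable def EMat (n : ℕ) (k : Fin n) : Matrix (Fin (n + 1)) (Fin (n + 1)) ℝ :=
  Matrix.single (Fin.castSucc k) (Fin.last n) 1

end Mat

/-- If `g = h·s` with `h ∈ N`, then `ψ(g) = ψ(s) + m·∑ αᵢ Eᵢ` for some integers `αᵢ`;
equivalently `φ(g) = φ(s)` and `π(g) − π(s) = m·∑ αᵢ tᵢ`. -/
theorem psi_of_coset_of_N (n : ℕ) (S : YBSol (Fin n))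
    (hnd : S.NonDeg) (hinv : S.Invol)
    (φ : S.G →* Equiv.Perm (Fin n)) (hφ : ∀ x y : Fin n, φ (S.gen x) y = S.σ x y)
    (π : S.G → (Fin n →₀ ℤ)) (hπbij : Function.Bijective π)
    (hπgen : ∀ x : Fin n, π (S.gen x) = Finsupp.single x 1)
    (hπcoc : ∀ g h : S.G, π (g * h) = π g + Finsupp.mapDomain (⇑(φ g)) (π h))
    (D : Fin n → Fin n) (hD : ∀ x, S.σ x (D x) = x)
    (m : ℕ) (hm : ∀ x y : Fin n, sigIter S D m x y = y)
    (θ : Fin n → S.G)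
    (hθ : ∀ x : Fin n, θ x = (((List.range m).map fun i => S.gen (D^[i] x)).prod))
    (M : S.G → Matrix (Fin (n + 1)) (Fin (n + 1)) ℝ)
    (hM : ∀ g : S.G, M g = matOf (φ g) (fun i => π g i))
    (g h s : S.G) (hh : h ∈ Subgroup.closure (Set.range θ)) (hg : g = h * s) :
    ∃ α : Fin n → ℤ,
      M g = M s + ∑ i : Fin n, ((m : ℝ) * (α i : ℝ)) • EMat n i ∧
      φ g = φ s ∧
      π g = π s + ∑ i : Fin n, Finsupp.single i ((m : ℤ) * α i) := by
  have hW : ∀ (k : ℕ) (x : Fin n),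
      (∀ y, φ (((List.range k).map fun i => S.gen (D^[i] x)).prod) y = sigIter S D k x y) ∧
      π (((List.range k).map fun i => S.gen (D^[i] x)).prod) = Finsupp.single x (k : ℤ) := by
    have h1 : π 1 = 0 := by
      have := hπcoc 1 1
      simpa using this
    intro k
    induction k with
    | zero => intro x; simp [sigIter, h1]
    | succ k ih =>
      intro x
      have e : (((List.range (k+1)).map fun i => S.gen (D^[i] x)).prod)
          = S.gen x * (((List.range k).map fun i => S.gen (D^[i] (D x))).prod) := by
        rw [List.range_succ_eq_map, List.map_cons, List.prod_cons, List.map_map]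
        rfl
      rw [e]
      obtain ⟨i1, i2⟩ := ih (D x)
      refine ⟨fun y => ?_, ?_⟩
      · rw [map_mul, Equiv.Perm.mul_apply, i1, hφ]
        rfl
      · rw [hπcoc, i2, hπgen, Finsupp.mapDomain_single, hφ, hD, ← Finsupp.single_add]
        push_cast
        rw [add_comm]
  have key : φ h = 1 ∧ ∃ a : Fin n →₀ ℤ, π h = (m : ℤ) • a := by
    have h1 : π 1 = 0 := by
      have := hπcoc 1 1
      simpa using this
    have mid : ∀ v : Fin n →₀ ℤ, Finsupp.mapDomain (⇑(1 : Equiv.Perm (Fin n))) v = v := by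
      intro v
      exact Finsupp.mapDomain_id
    induction hh using Subgroup.closure_induction generalizing g with
    | mem x hx =>
      obtain ⟨z, rfl⟩ := hx
      rw [hθ]
      refine ⟨?_, Finsupp.single z 1, ?_⟩
      · ext y
        rw [(hW m z).1, hm]
        rfl
      · rw [(hW m z).2]; simp
    | one => exact ⟨map_one _, 0, by simp [h1]⟩
    | mul x y _ _ hx hy =>
      obtain ⟨p, a, ha⟩ := hx _ rfl
      obtain ⟨q, b, hb⟩ := hy _ rfl
      refine ⟨by simp [p, q], a + b, ?_⟩
      rw [hπcoc, p, mid, ha, hb, smul_add]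
    | inv x _ hx =>
      obtain ⟨p, a, ha⟩ := hx _ rfl
      refine ⟨by simp [p], -a, ?_⟩
      have := hπcoc x x⁻¹
      rw [mul_inv_cancel, h1, p, mid, ha] at this
      rw [smul_neg]
      exact (neg_eq_of_add_eq_zero_right this.symm).symm
  obtain ⟨hp, a, ha⟩ := key
  have hφg : φ g = φ s := by rw [hg, map_mul, hp, one_mul]
  have hπg : ∀ i, π g i = π s i + m * a i := by
    intro i
    have : Finsupp.mapDomain (⇑(1 : Equiv.Perm (Fin n))) (π s) = π s := Finsupp.mapDomain_id
    rw [hg, hπcoc, hp, this, ha]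
    simp [add_comm]
  refine ⟨fun i => a i, ?_, hφg, ?_⟩
  · rw [hM, hM, hφg]
    ext i j
    simp only [matOf, EMat, Matrix.add_apply, Matrix.sum_apply, Matrix.smul_apply, Matrix.of_apply,
      Matrix.single_apply, hπg]
    refine Fin.lastCases ?_ (fun i => ?_) i
    · simp [Fin.castSucc_ne_last]
    · refine Fin.lastCases ?_ (fun j => ?_) j
      · simp
      · simp [(Fin.castSucc_ne_last j).symm]
  · ext i
    rw [hπg]
    simp [Finsupp.finset_sum_apply, Finsupp.single_apply]
end

section
/- Let (X,r) be a non-degenerate involutive set-theoretic solution with X = {x_1,…,x_n} finite, of class m, with structure group G(X,r), maps φ and π, matrix representation ψ : G(X,r) → GL_{n+1}(ℝ), and frozen elements θ_{x_k}. Then for every 1 ≤ k ≤ n, ψ(θ_{x_k}) = ψ(1) + m·E_k; in particular E_k = (1/m)(ψ(θ_{x_k}) − ψ(1)), so each E_k lies in the ℝ-linear span of {ψ(θ_{x_1}),…,ψ(θ_{x_n}), ψ(1)} in M_{n+1}(ℝ). -/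
open scoped BigOperators

/-- `ψ(θ_k) = ψ(1) + m·E_k`; in particular `E_k = (1/m)(ψ(θ_k) − ψ(1))`, so each
`E_k` lies in the real span of `{ψ(θ_1),…,ψ(θ_n), ψ(1)}`. -/
theorem EMat_in_span (n : ℕ) (S : YBSol (Fin n))
    (hnd : S.NonDeg) (hinv : S.Invol)
    (φ : S.G →* Equiv.Perm (Fin n)) (hφ : ∀ x y : Fin n, φ (S.gen x) y = S.σ x y)
    (π : S.G → (Fin n →₀ ℤ)) (hπbij : Function.Bijective π)
    (hπgen : ∀ x : Fin n, π (S.gen x) = Finsupp.single x 1)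
    (hπcoc : ∀ g h : S.G, π (g * h) = π g + Finsupp.mapDomain (⇑(φ g)) (π h))
    (D : Fin n → Fin n) (hD : ∀ x, S.σ x (D x) = x)
    (m : ℕ) (hm1 : 1 ≤ m) (hm : ∀ x y : Fin n, sigIter S D m x y = y)
    (θ : Fin n → S.G)
    (hθ : ∀ x : Fin n, θ x = (((List.range m).map fun i => S.gen (D^[i] x)).prod))
    (M : S.G → Matrix (Fin (n + 1)) (Fin (n + 1)) ℝ)
    (hM : ∀ g : S.G, M g = matOf (φ g) (fun i => π g i)) :
    ∀ k : Fin n,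
      M (θ k) = M 1 + (m : ℝ) • EMat n k ∧
      EMat n k = ((m : ℝ))⁻¹ • (M (θ k) - M 1) ∧
      EMat n k ∈ Submodule.span ℝ
        ({M 1} ∪ Set.range fun j : Fin n => M (θ j)) := by
  have hπ1 : π 1 = 0 := by
    have h := hπcoc 1 1
    rw [mul_one, map_one] at h
    have h2 : Finsupp.mapDomain (⇑(1 : Equiv.Perm (Fin n))) (π 1) = π 1 := by
      rw [Equiv.Perm.coe_one, Finsupp.mapDomain_id]
    rw [h2] at h
    exact left_eq_add.mp h
  have hstep : ∀ (j : ℕ) (x : Fin n),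
      ((List.range (j + 1)).map fun i => S.gen (D^[i] x)).prod =
        S.gen x * ((List.range j).map fun i => S.gen (D^[i] (D x))).prod := by
    intro j x
    rw [List.range_succ_eq_map, List.map_cons, List.prod_cons, List.map_map]
    rfl
  have hφθ : ∀ (j : ℕ) (x y : Fin n),
      φ ((List.range j).map fun i => S.gen (D^[i] x)).prod y = sigIter S D j x y := by
    intro j
    induction j with
    | zero => intro x y; simp [sigIter]
    | succ j ih =>
      intro x y
      rw [hstep, map_mul, Equiv.Perm.mul_apply, ih, hφ]
      rfl
  have hπθ : ∀ (j : ℕ) (x : Fin n),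
      π ((List.range j).map fun i => S.gen (D^[i] x)).prod = Finsupp.single x (j : ℤ) := by
    intro j
    induction j with
    | zero => intro x; simp [hπ1]
    | succ j ih =>
      intro x
      rw [hstep, hπcoc, ih, hπgen, Finsupp.mapDomain_single, hφ, hD, ← Finsupp.single_add]
      push_cast
      rw [add_comm]
  have hm0 : (m : ℝ) ≠ 0 := by
    have : m ≠ 0 := by omega
    exact_mod_cast this
  intro k
  have hφk : φ (θ k) = 1 := by
    ext y
    rw [hθ, hφθ, hm]
    rfl
  have hπk : π (θ k) = Finsupp.single k (m : ℤ) := by rw [hθ, hπθ]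
  have h1 : M (θ k) = M 1 + (m : ℝ) • EMat n k := by
    rw [hM, hM, hφk, hπk, hπ1, map_one]
    ext i j
    refine Fin.lastCases ?_ (fun i => ?_) i <;> refine Fin.lastCases ?_ (fun j => ?_) j
    · simp [matOf, EMat, Matrix.single_apply, Fin.castSucc_ne_last]
    · simp [matOf, EMat, Matrix.single_apply, Fin.castSucc_ne_last]
    · simp [matOf, EMat, Matrix.single_apply, Finsupp.single_apply]
    · simp [matOf, EMat, Matrix.single_apply, (Fin.castSucc_ne_last _).symm]
  have h2 : EMat n k = ((m : ℝ))⁻¹ • (M (θ k) - M 1) := by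
    rw [h1, add_sub_cancel_left, smul_smul, inv_mul_cancel₀ hm0, one_smul]
  refine ⟨h1, h2, ?_⟩
  rw [h2]
  refine Submodule.smul_mem _ _ (Submodule.sub_mem _ ?_ ?_)
  · exact Submodule.subset_span (Or.inr ⟨k, rfl⟩)
  · exact Submodule.subset_span (Or.inl rfl)
end

section
/- Let (X,r) be a non-degenerate involutive set-theoretic solution with X = {x_1,…,x_n} finite, of class m, with structure group G(X,r), maps φ and π, matrix representation ψ : G(X,r) → GL_{n+1}(ℝ), and frozen elements θ_{x_k}. Let T ⊆ G(X,r) be a set of coset representatives for Ker(φ) in G(X,r) (exactly one element per coset) with 1 ∈ T. Then the ℝ-linear span of {ψ(g) : g ∈ G(X,r)} in M_{n+1}(ℝ) equals the ℝ-linear span of {ψ(θ_{x_k}) : 1 ≤ k ≤ n} ∪ {ψ(v) : v ∈ T}; in particular this span is finite-dimensional of dimension at most n + |φ(G(X,r))|. -/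
open scoped BigOperators

theorem frozen_phi {n : ℕ} (S : YBSol (Fin n))
    (φ : S.G →* Equiv.Perm (Fin n)) (hφ : ∀ x y : Fin n, φ (S.gen x) y = S.σ x y)
    (D : Fin n → Fin n) (k : ℕ) : ∀ x y : Fin n,
    φ (((List.range k).map fun i => S.gen (D^[i] x)).prod) y = sigIter S D k x y := by
  induction k with
  | zero => intro x y; simp [sigIter]
  | succ k ih =>
    intro x y
    have h := ih (D x) y
    rw [List.range_succ_eq_map]
    simp only [List.map_cons, List.map_map, List.prod_cons, map_mul, Equiv.Perm.mul_apply,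
      Function.iterate_zero, id_eq, sigIter, Function.comp_apply]
    rw [hφ, ← h]
    rfl

theorem frozen_pi {n : ℕ} (S : YBSol (Fin n))
    (φ : S.G →* Equiv.Perm (Fin n)) (hφ : ∀ x y : Fin n, φ (S.gen x) y = S.σ x y)
    (π : S.G → (Fin n →₀ ℤ))
    (hπgen : ∀ x : Fin n, π (S.gen x) = Finsupp.single x 1)
    (hπcoc : ∀ g h : S.G, π (g * h) = π g + Finsupp.mapDomain (⇑(φ g)) (π h))
    (hπ1 : π 1 = 0)
    (D : Fin n → Fin n) (hD : ∀ x, S.σ x (D x) = x) (k : ℕ) : ∀ x : Fin n,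
    π (((List.range k).map fun i => S.gen (D^[i] x)).prod) = Finsupp.single x (k : ℤ) := by
  induction k with
  | zero => intro x; simp [hπ1]
  | succ k ih =>
    intro x
    have h := ih (D x)
    have e : ((List.range (k+1)).map fun i => S.gen (D^[i] x)).prod
        = S.gen x * ((List.range k).map fun i => S.gen (D^[i] (D x))).prod := by
      rw [List.range_succ_eq_map]
      simp only [List.map_cons, List.map_map, List.prod_cons]
      rfl
    rw [e, hπcoc, h, hπgen, Finsupp.mapDomain_single, hφ, hD, ← Finsupp.single_add]
    push_cast
    rw [add_comm]

theorem matOf_diff {n : ℕ} (p : Equiv.Perm (Fin n)) (v w : Fin n → ℤ) :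
    matOf p v = matOf p w + ∑ k, ((v k : ℝ) - (w k : ℝ)) • EMat n k := by
  ext i j
  rw [Matrix.add_apply, Matrix.sum_apply]
  simp only [Matrix.smul_apply, EMat, matOf, Matrix.of_apply, Matrix.single_apply, smul_eq_mul]
  refine Fin.lastCases ?_ (fun i => ?_) i <;> refine Fin.lastCases ?_ (fun j => ?_) j
  · simp [Fin.castSucc_ne_last]
  · simp [Fin.castSucc_ne_last]
  · simp
  · simp [(Fin.castSucc_ne_last j).symm]

/-- The real span of `{ψ(g) : g ∈ G(X,r)}` equals the span of
`{ψ(θ_k) : 1 ≤ k ≤ n} ∪ {ψ(v) : v ∈ T}`, where `T` is a set of coset representatives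
of `Ker(φ)` containing `1`; in particular it is finite-dimensional of dimension at
most `n + |φ(G(X,r))|`. -/
theorem span_image_psi (n : ℕ) (S : YBSol (Fin n))
    (hnd : S.NonDeg) (hinv : S.Invol)
    (φ : S.G →* Equiv.Perm (Fin n)) (hφ : ∀ x y : Fin n, φ (S.gen x) y = S.σ x y)
    (π : S.G → (Fin n →₀ ℤ)) (hπbij : Function.Bijective π)
    (hπgen : ∀ x : Fin n, π (S.gen x) = Finsupp.single x 1)
    (hπcoc : ∀ g h : S.G, π (g * h) = π g + Finsupp.mapDomain (⇑(φ g)) (π h))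
    (D : Fin n → Fin n) (hD : ∀ x, S.σ x (D x) = x)
    (m : ℕ) (hm1 : 1 ≤ m) (hm : ∀ x y : Fin n, sigIter S D m x y = y)
    (θ : Fin n → S.G)
    (hθ : ∀ x : Fin n, θ x = (((List.range m).map fun i => S.gen (D^[i] x)).prod))
    (M : S.G → Matrix (Fin (n + 1)) (Fin (n + 1)) ℝ)
    (hM : ∀ g : S.G, M g = matOf (φ g) (fun i => π g i))
    (T : Set S.G) (hT1 : (1 : S.G) ∈ T)
    (hT : ∀ g : S.G, ∃! v : S.G, v ∈ T ∧ φ v = φ g) :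
    Submodule.span ℝ (Set.range M) =
      Submodule.span ℝ ((Set.range fun x : Fin n => M (θ x)) ∪ (M '' T)) ∧
    FiniteDimensional ℝ ↥(Submodule.span ℝ (Set.range M)) ∧
    Module.finrank ℝ ↥(Submodule.span ℝ (Set.range M)) ≤ n + Nat.card ↥φ.range := by
  have hπ1 : π 1 = 0 := by
    have h := hπcoc 1 1
    simpa using h
  have hφθ : ∀ x, φ (θ x) = 1 := by
    intro x
    ext y
    rw [hθ, frozen_phi S φ hφ D m x y, hm]
    rfl
  have hπθ : ∀ x, π (θ x) = Finsupp.single x (m : ℤ) := by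
    intro x
    rw [hθ, frozen_pi S φ hφ π hπgen hπcoc hπ1 D hD m x]
  have hm0 : (m : ℝ) ≠ 0 := by
    have : m ≠ 0 := by omega
    exact_mod_cast this
  have hMθ : ∀ x, M (θ x) = M 1 + (m : ℝ) • EMat n x := by
    intro x
    rw [hM, hM, hφθ, map_one, matOf_diff 1 _ (fun i => π 1 i), hπθ, hπ1]
    congr 1
    rw [Finset.sum_eq_single x]
    · simp
    · intro b _ hb
      simp [Finsupp.single_apply, hb.symm]
    · simp
  have hE : ∀ x, EMat n x ∈
      Submodule.span ℝ ((Set.range fun x : Fin n => M (θ x)) ∪ (M '' T)) := by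
    intro x
    have e : EMat n x = (m : ℝ)⁻¹ • (M (θ x) - M 1) := by
      rw [hMθ, add_sub_cancel_left, smul_smul, inv_mul_cancel₀ hm0, one_smul]
    rw [e]
    refine Submodule.smul_mem _ _ (Submodule.sub_mem _ ?_ ?_)
    · exact Submodule.subset_span (Or.inl ⟨x, rfl⟩)
    · exact Submodule.subset_span (Or.inr ⟨1, hT1, rfl⟩)
  have hspan : Submodule.span ℝ (Set.range M) =
      Submodule.span ℝ ((Set.range fun x : Fin n => M (θ x)) ∪ (M '' T)) := by
    apply le_antisymm
    · rw [Submodule.span_le]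
      rintro _ ⟨g, rfl⟩
      obtain ⟨v, ⟨hv, hvg⟩, -⟩ := hT g
      have e : M g = M v + ∑ k, ((π g k : ℝ) - (π v k : ℝ)) • EMat n k := by
        rw [hM, hM, hvg]
        exact matOf_diff _ _ _
      rw [SetLike.mem_coe, e]
      refine Submodule.add_mem _ (Submodule.subset_span (Or.inr ⟨v, hv, rfl⟩)) ?_
      exact Submodule.sum_mem _ fun k _ => Submodule.smul_mem _ _ (hE k)
    · apply Submodule.span_mono
      rintro _ (⟨x, rfl⟩ | ⟨v, -, rfl⟩)
      · exact ⟨_, rfl⟩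
      · exact ⟨_, rfl⟩
  refine ⟨hspan, inferInstance, ?_⟩
  have hinj : Function.Injective (fun v : T => (⟨φ v, ⟨v, rfl⟩⟩ : φ.range)) := by
    intro v w h
    have h' : φ v = φ w := congrArg Subtype.val h
    exact Subtype.ext ((hT w).unique ⟨v.2, h'⟩ ⟨w.2, rfl⟩)
  have hTcard : Nat.card T ≤ Nat.card φ.range := Nat.card_le_card_of_injective _ hinj
  have hTfin : Finite T := Finite.of_injective _ hinj
  have hTf : T.Finite := hTfin
  have hfin : ((Set.range fun x : Fin n => M (θ x)) ∪ (M '' T)).Finite :=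
    (Set.finite_range _).union (hTf.image _)
  rw [hspan]
  have : Fintype ↥((Set.range fun x : Fin n => M (θ x)) ∪ (M '' T)) := hfin.fintype
  refine (finrank_span_le_card (R := ℝ) _).trans ?_
  rw [← Set.ncard_eq_toFinset_card']
  refine (Set.ncard_union_le _ _).trans (add_le_add ?_ ?_)
  · rw [← Set.image_univ]
    refine (Set.ncard_image_le Set.finite_univ).trans ?_
    simp [Set.ncard_univ]
  · exact (Set.ncard_image_le hTf).trans hTcard
end

section
/- Let (X,r) be a finite non-degenerate involutive set-theoretic solution of the Yang–Baxter equation and let D : X → X be defined by D(x) = σ_x^{-1}(x). Then there exists a natural number m ≥ 1 such that σ_x ∘ σ_{D(x)} ∘ σ_{D²(x)} ∘ ⋯ ∘ σ_{D^{m-1}(x)} = id_X for every x ∈ X (i.e., every finite non-degenerate involutive solution has a finite class). -/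
open scoped BigOperators

/-- Every finite non-degenerate involutive solution has a finite class: there is
`m ≥ 1` with `σ_x ∘ σ_{D(x)} ∘ ⋯ ∘ σ_{D^{m-1}(x)} = id` for every `x`. -/
theorem exists_finite_class {X : Type*} [Finite X] (S : YBSol X)
    (hnd : S.NonDeg) (hinv : S.Invol)
    (D : X → X) (hD : ∀ x, S.σ x (D x) = x) :
    ∃ m : ℕ, 1 ≤ m ∧ ∀ x y : X, sigIter S D m x y = y := by
  classical
  have hDinj : ∀ x y, D x = D y → x = y := by
    have key : ∀ x, S.γ (D x) x = D x := by
      intro x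
      have h2 := congrFun hinv (x, D x)
      have h1 : S.r (x, D x) = (x, S.γ (D x) x) := Prod.ext (hD x) rfl
      simp only [Function.comp_apply, id] at h2
      rw [h1] at h2
      have h3 : S.σ x (S.γ (D x) x) = x := congrArg Prod.fst h2
      exact (hnd.1 x).1 (h3.trans (hD x).symm)
    intro x y h
    apply (hnd.2 (D x)).1
    rw [key x, h, key y]
  choose τ hτ using fun x => (hnd.1 x).2
  let F : X × X → X × X := fun p => (D p.1, τ p.1 p.2)
  have hF : Function.Injective F := by
    rintro ⟨x, y⟩ ⟨x', y'⟩ h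
    have h1 : D x = D x' := congrArg Prod.fst h
    have h2 : τ x y = τ x' y' := congrArg Prod.snd h
    obtain rfl := hDinj _ _ h1
    have := congrArg (S.σ x) h2
    rw [hτ, hτ] at this
    rw [this]
  have inv : ∀ m x y, sigIter S D m x (F^[m] (x, y)).2 = y := by
    intro m
    induction m with
    | zero => intro x y; rfl
    | succ k ih =>
      intro x y
      have := ih (D x) (τ x y)
      change S.σ x (sigIter S D k (D x) (F^[k] (D x, τ x y)).2) = y
      rw [this, hτ]
  let e : Equiv.Perm (X × X) := Equiv.ofBijective F (Finite.injective_iff_bijective.1 hF)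
  refine ⟨orderOf e, orderOf_pos e, fun x y => ?_⟩
  have h1 : F^[orderOf e] (x, y) = (x, y) := by
    have h := pow_orderOf_eq_one e
    have h' := congrArg (fun f : Equiv.Perm (X × X) => f (x, y)) h
    simp only [← Equiv.Perm.iterate_eq_pow] at h'
    exact h'
  have h2 := inv (orderOf e) x y
  rwa [h1] at h2
end

section
/- Let G be a left brace and define λ_a(b) = a·b − a. Then the socle Soc(G) = {a ∈ G : λ_a = id_G} equals {a ∈ G : a·b = a + b for all b ∈ G}, and Soc(G) is an ideal of G: it is a normal subgroup of the multiplicative group (G,·), and λ_b(a) ∈ Soc(G) for every b ∈ G and a ∈ Soc(G). -/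
/-- The socle `Soc(G) = {a : λ_a = id}` of a left brace equals
`{a : a·b = a + b for all b}`, and it is an ideal: a normal subgroup of the
multiplicative group which is invariant under every `λ_b`. -/
theorem leftBrace_socle_ideal {G : Type*} [AddCommGroup G] [Group G]
    (hB : ∀ a b c : G, a * (b + c) = a * b + a * c - a) :
    ({a : G | ∀ b : G, a * b - a = b} = {a : G | ∀ b : G, a * b = a + b}) ∧
    (∃ H : Subgroup G, (H : Set G) = {a : G | ∀ b : G, a * b - a = b} ∧ H.Normal) ∧
    (∀ b a : G, (∀ c : G, a * c - a = c) →
      ∀ c : G, (b * a - b) * c - (b * a - b) = c) := by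
  have h0 : ∀ a : G, a * 0 = a := by
    intro a
    have h := hB a 0 0
    rw [add_zero] at h
    have h2 : a * 0 + a = a * 0 + a * 0 := eq_sub_iff_add_eq.mp h
    exact (add_left_cancel h2).symm
  have h10 : (1 : G) = 0 := by
    have h := h0 1
    rw [one_mul] at h
    exact h.symm
  have hs : ∀ a x y : G, a * (x - y) = a * x - a * y + a := by
    intro a x y
    have h := hB a (x - y) y
    rw [sub_add_cancel] at h
    rw [h]; abel
  have hL : ∀ a b c : G, (a * b) * c - a * b = a * (b * c - b) - a := by
    intro a b c
    rw [hs, mul_assoc]; abel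
  have hL1 : ∀ c : G, (1 : G) * c - 1 = c := by
    intro c
    rw [one_mul, h10, sub_zero]
  have hinv : ∀ b c : G, b * (b⁻¹ * c - b⁻¹) - b = c := by
    intro b c
    rw [← hL, mul_inv_cancel, hL1]
  have hconj : ∀ b a : G, (∀ c : G, a * c - a = c) →
      ∀ c : G, (b * a * b⁻¹) * c - (b * a * b⁻¹) = c := by
    intro b a ha c
    rw [hL, hL, ha, hinv]
  refine ⟨?_, ⟨⟨⟨⟨{a : G | ∀ b : G, a * b - a = b}, ?_⟩, ?_⟩, ?_⟩, rfl, ⟨?_⟩⟩, ?_⟩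
  · ext a
    simp only [Set.mem_setOf_eq, sub_eq_iff_eq_add']
  · intro a b ha hb c
    rw [hL, hb, ha]
  · exact hL1
  · intro a ha c
    have h := hinv a⁻¹ c
    rw [inv_inv, ha] at h
    exact h
  · intro a ha b
    exact hconj b a ha
  · intro b a ha
    have h : b * a - b = b * a * b⁻¹ := by
      have h1 : a * b⁻¹ = a + b⁻¹ := sub_eq_iff_eq_add'.mp (ha b⁻¹)
      rw [mul_assoc, h1, hB, mul_inv_cancel, h10, add_zero]
    rw [h]
    exact hconj b a ha
end

section
/- Let G be a left brace and define λ_a(b) = a·b − a for a,b ∈ G. Then the map r : G × G → G × G defined by r(x,y) = (λ_x(y), λ^{-1}_{λ_x(y)}(x)) is a non-degenerate involutive set-theoretic solution of the Yang–Baxter equation: r is a bijection satisfying the braid relation r^{12} r^{23} r^{12} = r^{23} r^{12} r^{23} on G³, r ∘ r = id_{G×G}, and for each x, y ∈ G both maps σ_x := λ_x and γ_y := (x ↦ λ^{-1}_{λ_x(y)}(x)) are bijections of G. -/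
/-- For a left brace `G`, the map `r(x,y) = (λ_x(y), λ⁻¹_{λ_x(y)}(x))` is a
non-degenerate involutive set-theoretic solution of the Yang–Baxter equation.
Here `μ a` denotes the inverse of the map `λ_a : b ↦ a·b − a`. -/
theorem leftBrace_gives_solution {G : Type*} [AddCommGroup G] [Group G]
    (hB : ∀ a b c : G, a * (b + c) = a * b + a * c - a)
    (μ : G → G → G)
    (hμ1 : ∀ a b : G, a * μ a b - a = b)
    (hμ2 : ∀ a b : G, μ a (a * b - a) = b)
    (r : G × G → G × G)
    (hr : ∀ x y : G, r (x, y) = (x * y - x, μ (x * y - x) x)) :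
    Function.Bijective r ∧
    r12 r ∘ r23 r ∘ r12 r = r23 r ∘ r12 r ∘ r23 r ∧
    r ∘ r = id ∧
    (∀ x : G, Function.Bijective fun y => (r (x, y)).1) ∧
    (∀ y : G, Function.Bijective fun x => (r (x, y)).2) := by
  have h0 : ∀ a : G, a * 0 = a := by
    intro a
    have h := hB a 0 0
    rw [add_zero] at h
    have h2 : a * 0 + (a * 0 - a) = a * 0 + 0 := by rw [add_zero, ← add_sub_assoc]; exact h.symm
    exact sub_eq_zero.mp (add_left_cancel h2)
  have h01 : (1 : G) = 0 := by
    have h := h0 1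
    rw [one_mul] at h
    exact h.symm
  have hS : ∀ a b c : G, a * (b - c) = a * b - a * c + a := by
    intro a b c
    have h := hB a (b - c) c
    rw [sub_add_cancel] at h
    rw [h]; abel
  have hm : ∀ a b : G, μ a b = a⁻¹ * (a + b) := by
    intro a b
    have h := hμ1 a b
    rw [eq_inv_mul_iff_mul_eq, ← sub_eq_iff_eq_add']
    exact h
  have hr' : ∀ x y : G, r (x, y) = (x * y - x, (x * y - x)⁻¹ * (x * y)) := by
    intro x y
    rw [hr, hm, sub_add_cancel]
  have hinv : r ∘ r = id := by
    funext ⟨x, y⟩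
    simp only [Function.comp, hr', id, mul_inv_cancel_left, sub_sub_cancel, inv_mul_cancel_left]
  refine ⟨?_, ?_, hinv, ?_, ?_⟩
  · exact Function.Involutive.bijective (fun p => congrFun hinv p)
  · funext ⟨x, y, z⟩
    have key1 : (x * y - x) * ((x * y - x)⁻¹ * (x * y) * z - (x * y - x)⁻¹ * (x * y))
        = x * y * z - x := by
      rw [hS, mul_assoc (x * y - x)⁻¹, mul_inv_cancel_left, mul_inv_cancel_left]; abel
    have hc : x * (y * z - y) - x = x * y * z - x * y := by
      rw [hS, mul_assoc]; abel
    have key2 : ∀ c : G, c = x * (y * z - y) - x →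
        c⁻¹ * (x * (y * z - y)) * ((y * z - y)⁻¹ * (y * z)) - c⁻¹ * (x * (y * z - y))
        = c⁻¹ * (x * y * z - x) := by
      intro c h
      rw [eq_inv_mul_iff_mul_eq, hS]
      simp only [mul_assoc, mul_inv_cancel_left]
      rw [h]; abel
    have e1 : x * y * z - x - (x * y - x) = x * (y * z - y) - x := by
      rw [hc]; abel
    simp only [Function.comp, r12, r23, hr']
    rw [key2 _ rfl, key1, e1]
    simp only [Prod.mk.injEq, true_and]
    have key3 : ((x * y - x)⁻¹ * (x * y) * z - (x * y - x)⁻¹ * (x * y))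
        = (x * y - x)⁻¹ * (x * y * z - x) := by
      rw [eq_inv_mul_iff_mul_eq, key1]
    rw [key3]
    simp only [mul_assoc, mul_inv_rev, inv_inv, mul_inv_cancel_left]
  · intro x
    simp only [hr']
    exact ⟨fun a b h => mul_left_cancel (sub_left_injective h),
      fun b => ⟨x⁻¹ * (b + x), by simp⟩⟩
  · intro y
    have hg : ∀ x : G, (r (x, y)).2 = (y⁻¹ * (y + x⁻¹))⁻¹ := by
      intro x
      have h : x⁻¹ * (x * y - x) = y + x⁻¹ := by
        rw [hS, inv_mul_cancel_left, inv_mul_cancel, h01, sub_zero]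
      rw [hr', ← h]
      simp only [mul_inv_rev, inv_inv, mul_assoc]
    simp only [hg]
    refine ⟨fun a b h => ?_, fun w => ⟨(y * w⁻¹ - y)⁻¹, by simp⟩⟩
    exact inv_injective (add_left_cancel (mul_left_cancel (inv_injective h)))
end
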